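/- Let μ ∈ ℝ, set α := −iμ/2, and let u : ℝ → ℂ be a smooth solution of the PII equation u''(x) = x·u(x) + 2·u(x)³ − α on ℝ, taking purely imaginary values on ℝ and satisfying the asymptotic expansion (A+): there exist x₀, K > 0 such that |u(x) − α/x − 2α(1−α²)·x^{−4} − 4α(1−α²)(10−3α²)·x^{−7}| ≤ K·x^{−10} for all x ≥ x₀. Define w(x) := ∫₀ˣ exp( (2/3^{1/3}) ∫₀^y u(z/3^{1/3}) dz ) dy − C with C := (2·3^{1/3}/(1−iμ))·(u'(0) − u(0)²), and g(x) := e^{iμ·ln|x|}·w(x)/x for x ≠ 0. Then there exists θ̃₊ ∈ [0,2π) such that g(x) = Ã₀ + Ã₁·x^{−3} + Ã₂·x^{−6} + O(x^{−9}) as x → +∞, where Ã₀ := (1+μ²)^{−1/2}·e^{iθ̃₊}, Ã₁ := (iμ−1)·(iμ+μ²/2)·Ã₀, and Ã₂ := (2+iμ)·(μ²/4 − iμ + 6)·Ã₁. -/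

import Mathlib

/-!
Put `c = 3^{1/3}`, `s = x / c` and `G(s) = exp (2 ∫₀ˢ u)`. Since `G' = 2uG`, the Painlevé equation
gives `(G · (s - 2(u' - u²)))' = (1 + 2α) G`, so the integral of `G` is explicit
(`antideriv_identity`). The constant `C` is exactly the boundary term at `0`, whence
`w(x) = c G(s) (s - 2(u'(s) - u(s)²)) / (1 - iμ)` (`w_formula`) and
`g(x) = e^{iμ log c} / (1 - iμ) · e^{iμ log s} G(s) · (1 - 2(u'(s) - u(s)²) / s)`.

It remains to expand the last two factors in powers of `s⁻¹` (`asymp_s`).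

* For `u'`: the remainder `r` of the given expansion of `u` is `O(s⁻¹⁰)`; inserting it into the
  equation shows `r'' = O(s⁻⁹)`, and a Landau-type interpolation (`deriv_isBigO`) gives
  `r' = O(s⁻⁹)`.
* For `e^{iμ log s} G(s)`: integrating the expansion of `u` term by term leaves an error with
  derivative `O(s⁻¹⁰)`, so it converges to a constant with rate `O(s⁻⁹)`
  (`exists_limit_of_deriv_isBigO`). The constant is purely imaginary because `u` is, so it only
  contributes a phase.

The product of the two expansions, with `s⁻³ = 3 x⁻³`, gives the coefficients in the statement, and
`|1 - iμ|⁻¹ = (1 + μ²)^{-1/2}` gives the modulus of the leading one.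
-/

/-- The real cube root of 3. -/
noncomputable def cbrt3 : ℝ := (3 : ℝ) ^ ((1:ℝ)/3)

open Filter Asymptotics Complex

/-! ### Asymptotic calculus at `+∞` -/

lemma inv_isBigO_one : (fun s : ℝ => (s:ℂ)⁻¹) =O[atTop] (fun _ => (1:ℂ)) := by
  refine IsBigO.of_bound 1 ?_
  filter_upwards [eventually_ge_atTop (1:ℝ)] with s hs
  simp only [norm_inv, norm_real, norm_one, mul_one, Real.norm_eq_abs]
  rw [abs_of_pos (by linarith)]
  exact inv_le_one_of_one_le₀ hs

/-- Landau-type interpolation: if `r` and its second derivative `r2` are `O(s⁻ⁿ)`, so is its first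
derivative `r1`. This follows from comparing `r (s + 1)` with the first-order Taylor polynomial
at `s`. -/
lemma deriv_isBigO {r r1 r2 : ℝ → ℂ} {n : ℕ}
    (h1 : ∀ᶠ s in atTop, HasDerivAt r (r1 s) s) (h2 : ∀ᶠ s in atTop, HasDerivAt r1 (r2 s) s)
    (hr : r =O[atTop] fun s : ℝ => ((s:ℂ)⁻¹) ^ n)
    (hr2 : r2 =O[atTop] fun s : ℝ => ((s:ℂ)⁻¹) ^ n) :
    r1 =O[atTop] fun s : ℝ => ((s:ℂ)⁻¹) ^ n := by
  obtain ⟨K, hK, hrK⟩ := hr.exists_pos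
  obtain ⟨M, hM, hrM⟩ := hr2.exists_pos
  obtain ⟨X, hX⟩ := eventually_atTop.1 (h1.and (h2.and (hrK.bound.and hrM.bound)))
  refine IsBigO.of_bound (2 * K + M) ?_
  filter_upwards [eventually_ge_atTop X, eventually_gt_atTop 0] with s hs hs0
  have key : ∀ y ∈ Set.Icc s (s+1), ‖((y:ℂ)⁻¹) ^ n‖ ≤ ‖((s:ℂ)⁻¹) ^ n‖ := by
    intro y hy
    simp only [norm_pow, norm_inv, norm_real, Real.norm_eq_abs]
    have h1 : |s| ≤ |y| := by
      rw [abs_of_pos hs0, abs_of_pos (by linarith [hy.1])]; exact hy.1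
    have : 0 < |s| := abs_pos.2 hs0.ne'
    gcongr
  have hs1 : s ∈ Set.Icc s (s+1) := by constructor <;> linarith
  have hs2 : s + 1 ∈ Set.Icc s (s+1) := by constructor <;> linarith
  have hd : ∀ y ∈ Set.Icc s (s+1), ‖r1 y - r1 s‖ ≤ M * ‖((s:ℂ)⁻¹) ^ n‖ := by
    intro y hy
    have := (convex_Icc s (s+1)).norm_image_sub_le_of_norm_hasDerivWithin_le (f := r1) (f' := r2)
      (C := M * ‖((s:ℂ)⁻¹) ^ n‖)
      (fun z hz => (hX z (hs.trans hz.1)).2.1.hasDerivWithinAt)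
      (fun z hz => ((hX z (hs.trans hz.1)).2.2.2).trans (by gcongr; exact key z hz)) hs1 hy
    refine this.trans (mul_le_of_le_one_right (by positivity) ?_)
    rw [Real.norm_eq_abs, abs_of_nonneg (by linarith [hy.1])]; linarith [hy.2]
  -- `r` minus its tangent part at `s` has small derivative on `[s, s + 1]`
  have h := (convex_Icc s (s+1)).norm_image_sub_le_of_norm_hasDerivWithin_le
      (f := fun y => r y - ((y - s : ℝ) : ℂ) * r1 s) (f' := fun y => r1 y - r1 s)
      (C := M * ‖((s:ℂ)⁻¹) ^ n‖)
      (fun z hz => by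
        have := (hX z (hs.trans hz.1)).1.sub
          ((((hasDerivAt_id z).sub_const s).ofReal_comp).mul_const (r1 s))
        simpa [Pi.sub_def] using this.hasDerivWithinAt) hd hs1 hs2
  have e : r1 s = r (s+1) - r s -
      ((r (s+1) - ((s + 1 - s : ℝ) : ℂ) * r1 s) - (r s - ((s - s : ℝ) : ℂ) * r1 s)) := by
    simp
  have a1 := (hX (s+1) (by linarith)).2.2.1
  have a2 := (hX s hs).2.2.1
  have a3 : ‖r (s+1)‖ ≤ K * ‖((s:ℂ)⁻¹) ^ n‖ := a1.trans (by gcongr; exact key _ hs2)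
  have a4 : ‖s + 1 - s‖ = 1 := by simp
  rw [a4, mul_one] at h
  rw [e]
  refine (norm_sub_le _ _).trans ?_
  have := norm_sub_le (r (s+1)) (r s)
  linarith

/-- A function whose derivative is `O(s⁻¹⁰)` converges at `+∞` with rate `O(s⁻⁹)`. -/
lemma exists_limit_of_deriv_isBigO {f f' : ℝ → ℂ}
    (h1 : ∀ᶠ s in atTop, HasDerivAt f (f' s) s)
    (hf' : f' =O[atTop] fun s : ℝ => ((s:ℂ)⁻¹) ^ 10) :
    ∃ L, Tendsto f atTop (nhds L) ∧ (fun s => f s - L) =O[atTop] fun s : ℝ => ((s:ℂ)⁻¹) ^ 9 := by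
  obtain ⟨K, hK, hfK⟩ := hf'.exists_pos
  obtain ⟨X, hX⟩ := eventually_atTop.1 (h1.and (hfK.bound.and (eventually_gt_atTop 0)))
  have hX0 : 0 < X := (hX X le_rfl).2.2
  have key : ∀ a b, X ≤ a → a ≤ b → ‖f b - f a‖ ≤ K * (a⁻¹)^9 := by
    intro a b ha hab
    have ha0 : 0 < a := by linarith
    have h := image_norm_le_of_norm_deriv_right_le_deriv_boundary' (a := a) (b := b)
      (f := fun y => f y - f a) (f' := f') (B := fun y => K * (a⁻¹)^9 - K * (y⁻¹)^9)
      (B' := fun y => K * (9 * (y⁻¹)^10))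
      (fun z hz => ((hX z (ha.trans hz.1)).1.sub_const _).continuousAt.continuousWithinAt)
      (fun z hz => ((hX z (ha.trans hz.1)).1.sub_const _).hasDerivWithinAt)
      (by simp)
      (fun z hz => by
        have hz0 : z ≠ 0 := by linarith [hz.1]
        have : ContinuousAt (fun y : ℝ => K * (a⁻¹)^9 - K * (y⁻¹)^9) z :=
          continuousAt_const.sub (continuousAt_const.mul ((continuousAt_inv₀ hz0).pow 9))
        exact this.continuousWithinAt)
      (fun z hz => by
        have hz0 : z ≠ 0 := by linarith [hz.1]
        have : HasDerivAt (fun y : ℝ => K * (a⁻¹)^9 - K * (y⁻¹)^9) _ z :=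
          ((((hasDerivAt_inv hz0).fun_pow 9).const_mul K).const_sub (K * (a⁻¹)^9))
        refine (this.congr_deriv ?_).hasDerivWithinAt
        norm_num
        left
        rw [show z ^ 10 = z ^ 8 * z ^ 2 by ring, mul_inv, ← mul_assoc])
      (fun z hz => by
        have hz0 : 0 < z := by linarith [hz.1]
        refine ((hX z (ha.trans hz.1)).2.1).trans ?_
        simp only [norm_pow, norm_inv, norm_real, Real.norm_eq_abs, abs_of_pos hz0]
        have : 0 < (z⁻¹)^10 := by positivity
        nlinarith) ⟨hab, le_rfl⟩
    refine h.trans ?_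
    have : 0 < b := by linarith
    have : 0 < K * (b⁻¹)^9 := by positivity
    linarith
  have hlim : Tendsto (fun a : ℝ => K * (a⁻¹)^9) atTop (nhds 0) := by
    simpa using (tendsto_inv_atTop_zero.pow 9).const_mul K
  have hc : CauchySeq f := by
    rw [Metric.cauchySeq_iff']
    intro ε hε
    obtain ⟨N, hN1, hN2⟩ := ((hlim.eventually (gt_mem_nhds hε)).and (eventually_ge_atTop X)).exists
    exact ⟨N, fun n hn => by rw [dist_eq_norm]; exact (key N n hN2 hn).trans_lt hN1⟩
  obtain ⟨L, hL⟩ := cauchySeq_tendsto_of_complete hc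
  refine ⟨L, hL, IsBigO.of_bound K ?_⟩
  filter_upwards [eventually_ge_atTop X] with s hs
  have hs0 : 0 < s := by linarith
  have h := le_of_tendsto (hL.sub_const (f s)).norm
    ((eventually_ge_atTop s).mono fun b hb => key s b hs hb)
  rw [norm_sub_rev]
  simpa [abs_of_pos hs0] using h

/-- `f` is bounded near `+∞`. Expansions up to `O(s⁻ⁿ)` are handled as exact identities whose last
coefficient is a function with this property. -/
def BddTop (f : ℝ → ℂ) : Prop := f =O[atTop] fun _ => (1:ℂ)

lemma BddTop.const (c : ℂ) : BddTop (fun _ => c) := isBigO_const_const c one_ne_zero _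

lemma BddTop.add {f g : ℝ → ℂ} (hf : BddTop f) (hg : BddTop g) : BddTop (fun s => f s + g s) :=
  IsBigO.add hf hg

lemma BddTop.sub {f g : ℝ → ℂ} (hf : BddTop f) (hg : BddTop g) : BddTop (fun s => f s - g s) :=
  IsBigO.sub hf hg

lemma BddTop.mul {f g : ℝ → ℂ} (hf : BddTop f) (hg : BddTop g) : BddTop (fun s => f s * g s) := by
  simpa [BddTop] using IsBigO.mul hf hg

lemma BddTop.pow {f : ℝ → ℂ} (hf : BddTop f) (n : ℕ) : BddTop (fun s => f s ^ n) := by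
  simpa [BddTop] using IsBigO.pow hf n

lemma BddTop.inv : BddTop (fun s : ℝ => (s:ℂ)⁻¹) := inv_isBigO_one

lemma exists_bddTop {f : ℝ → ℂ} {n : ℕ} (hf : f =O[atTop] fun s : ℝ => ((s:ℂ)⁻¹) ^ n) :
    ∃ ρ, BddTop ρ ∧ ∀ᶠ s in atTop, f s = ρ s * ((s:ℂ)⁻¹) ^ n := by
  obtain ⟨φ, h1, h2⟩ := isBigO_iff_exists_eq_mul.1 hf
  exact ⟨φ, (isBigO_one_iff ℂ).2 h1, h2⟩

lemma isBigO_of_bddTop {f ρ : ℝ → ℂ} {n : ℕ} (hρ : BddTop ρ)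
    (h : ∀ᶠ s in atTop, f s = ρ s * ((s:ℂ)⁻¹) ^ n) :
    f =O[atTop] fun s : ℝ => ((s:ℂ)⁻¹) ^ n :=
  isBigO_iff_exists_eq_mul.2 ⟨ρ, (isBigO_one_iff ℂ).1 hρ, h⟩

lemma hasDerivAt_inv_pow {s : ℝ} (hs : s ≠ 0) (n : ℕ) :
    HasDerivAt (fun s : ℝ => ((s:ℂ)⁻¹) ^ n) (-n * ((s:ℂ)⁻¹) ^ (n+1)) s := by
  have hs' : (s:ℂ) ≠ 0 := by exact_mod_cast hs
  have := (((hasDerivAt_inv hs').comp_ofReal).fun_pow n)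
  refine this.congr_deriv ?_
  rcases n with _ | n
  · simp
  · simp only [Nat.add_sub_cancel]; push_cast; rw [← inv_pow]; ring

/-! ### The explicit antiderivative -/

/-- With `G = exp (2 ∫ u)`, the function `G · (s - 2(u' - u²))` has derivative `(1 + 2α) G`;
this is the identity integrated from `0` to `s`. -/
lemma antideriv_identity (α : ℂ) (u : ℝ → ℂ) (hu : ContDiff ℝ (⊤ : ℕ∞) u)
    (hP : ∀ x : ℝ, deriv (deriv u) x = (x : ℂ) * u x + 2 * (u x) ^ 3 - α) (s : ℝ) :
    (1 + 2 * α) * ∫ y in (0:ℝ)..s, exp (2 * ∫ z in (0:ℝ)..y, u z) =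
      exp (2 * ∫ z in (0:ℝ)..s, u z) * (s - 2 * (deriv u s - u s ^ 2))
        + 2 * (deriv u 0 - u 0 ^ 2) := by
  have h0 : Continuous u := hu.continuous
  have h1 : ∀ x, HasDerivAt u (deriv u x) x := fun x =>
    (hu.differentiable (by simp) x).hasDerivAt
  have h2 : ∀ x : ℝ, HasDerivAt (deriv u) ((x : ℂ) * u x + 2 * (u x) ^ 3 - α) x := fun x => by
    rw [← hP x]
    exact ((hu.of_le (m := 2) (WithTop.coe_le_coe.2 le_top)).differentiable_deriv_two x).hasDerivAt
  have hI : ∀ x, HasDerivAt (fun y => 2 * ∫ z in (0:ℝ)..y, u z) (2 * u x) x := fun x =>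
    (h0.integral_hasStrictDerivAt 0 x).hasDerivAt.const_mul 2
  have hE : ∀ x, HasDerivAt (fun y => exp (2 * ∫ z in (0:ℝ)..y, u z))
    (exp (2 * ∫ z in (0:ℝ)..x, u z) * (2 * u x)) x := fun x => (hI x).cexp
  have hE0 : Continuous (fun y => exp (2 * ∫ z in (0:ℝ)..y, u z)) :=
    continuous_iff_continuousAt.2 fun x => (hE x).continuousAt
  have hid : ∀ x : ℝ, HasDerivAt (fun y : ℝ => (y:ℂ)) 1 x := fun x => by
    simpa using (hasDerivAt_id x).ofReal_comp
  have hF : ∀ x, HasDerivAt (fun s : ℝ => exp (2 * ∫ z in (0:ℝ)..s, u z) *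
      ((s:ℂ) - 2 * (deriv u s - u s ^ 2)))
      ((1 + 2 * α) * exp (2 * ∫ z in (0:ℝ)..x, u z)) x := fun x => by
    refine ((hE x).fun_mul ((hid x).fun_sub
      (((h2 x).fun_sub ((h1 x).fun_pow 2)).const_mul 2))).congr_deriv ?_
    push_cast
    ring
  have := intervalIntegral.integral_eq_sub_of_hasDerivAt (a := 0) (b := s) (fun x _ => hF x)
    ((continuous_const.mul hE0).intervalIntegrable _ _)
  rw [intervalIntegral.integral_const_mul] at this
  rw [this]
  simp

/-! ### Expansion in the variable `s` -/

/-- Expansion of `s^{-2α} G(s) · (1 - 2(u' - u²)/s)` up to `O(s⁻⁹)`, where `G = exp (2 ∫₀ˢ u)`. -/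
lemma asymp_s (α : ℂ) (hα : α.re = 0) (u : ℝ → ℂ) (hu : ContDiff ℝ (⊤ : ℕ∞) u)
    (hP : ∀ x : ℝ, deriv (deriv u) x = (x : ℂ) * u x + 2 * (u x) ^ 3 - α)
    (him : ∀ x : ℝ, (u x).re = 0) (b4 b7 : ℂ) (hb4 : b4 = 2 * α * (1 - α ^ 2))
    (hb7 : b7 = 4 * α * (1 - α ^ 2) * (10 - 3 * α ^ 2))
    (hr : (fun s : ℝ => u s - α * (s:ℂ)⁻¹ - b4 * (s:ℂ)⁻¹ ^ 4 - b7 * (s:ℂ)⁻¹ ^ 7)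
      =O[atTop] fun s : ℝ => ((s:ℂ)⁻¹) ^ 10) :
    ∃ θ : ℝ, (fun s : ℝ => exp (2 * (∫ z in (0:ℝ)..s, u z) - 2 * α * Real.log s)
        * (1 - 2 * (deriv u s - u s ^ 2) * (s:ℂ)⁻¹)
      - exp (I * θ) * (1 + (2 * α + 2 * α ^ 2 - 2 * b4 / 3) * (s:ℂ)⁻¹ ^ 3
        + (8 * b4 + 4 * α * b4 - b7 / 3 + 2 * b4 ^ 2 / 9
          - 2 * b4 / 3 * (2 * α + 2 * α ^ 2)) * (s:ℂ)⁻¹ ^ 6))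
      =O[atTop] fun s : ℝ => ((s:ℂ)⁻¹) ^ 9 := by
  have h0 : Continuous u := hu.continuous
  have h1 : ∀ x, HasDerivAt u (deriv u x) x := fun x =>
    (hu.differentiable (by simp) x).hasDerivAt
  have h2 : ∀ x : ℝ, HasDerivAt (deriv u) ((x : ℂ) * u x + 2 * (u x) ^ 3 - α) x := fun x => by
    rw [← hP x]
    exact ((hu.of_le (m := 2) (WithTop.coe_le_coe.2 le_top)).differentiable_deriv_two x).hasDerivAt
  have hpos : ∀ᶠ s : ℝ in atTop, 0 < s := eventually_gt_atTop 0
  obtain ⟨ρ, hρ, hρe⟩ := exists_bddTop hr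
  -- the expansion of `u` may be differentiated once
  have hr1 : (fun s : ℝ => deriv u s + α * (s:ℂ)⁻¹ ^ 2 + 4 * b4 * (s:ℂ)⁻¹ ^ 5
      + 7 * b7 * (s:ℂ)⁻¹ ^ 8) =O[atTop] fun s : ℝ => ((s:ℂ)⁻¹) ^ 9 := by
    refine deriv_isBigO
      (r := fun s : ℝ => u s - α * (s:ℂ)⁻¹ - b4 * (s:ℂ)⁻¹ ^ 4 - b7 * (s:ℂ)⁻¹ ^ 7)
      (r2 := fun s : ℝ => ((s : ℂ) * u s + 2 * (u s) ^ 3 - α) - 2 * α * (s:ℂ)⁻¹ ^ 3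
        - 20 * b4 * (s:ℂ)⁻¹ ^ 6 - 56 * b7 * (s:ℂ)⁻¹ ^ 9) ?_ ?_ ?_ ?_
    · filter_upwards [hpos] with s hs
      have e1 := hasDerivAt_inv_pow hs.ne' 1
      have e4 := hasDerivAt_inv_pow hs.ne' 4
      have e7 := hasDerivAt_inv_pow hs.ne' 7
      simp only [pow_one] at e1
      refine ((((h1 s).fun_sub (e1.const_mul α)).fun_sub (e4.const_mul b4)).fun_sub
        (e7.const_mul b7)).congr_deriv ?_
      push_cast
      ring
    · filter_upwards [hpos] with s hs
      have e1 := hasDerivAt_inv_pow hs.ne' 2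
      have e4 := hasDerivAt_inv_pow hs.ne' 5
      have e7 := hasDerivAt_inv_pow hs.ne' 8
      refine ((((h2 s).fun_add (e1.const_mul α)).fun_add (e4.const_mul (4 * b4))).fun_add
        (e7.const_mul (7 * b7))).congr_deriv ?_
      push_cast
      ring
    · refine isBigO_of_bddTop (hρ.mul BddTop.inv) ?_
      filter_upwards [hρe] with s hs
      rw [hs]; ring
    · have hq : BddTop (fun s => b4 + b7 * (s:ℂ)⁻¹ ^ 3 + ρ s * (s:ℂ)⁻¹ ^ 6) :=
        ((BddTop.const _).add ((BddTop.const _).mul (BddTop.inv.pow 3))).add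
          (hρ.mul (BddTop.inv.pow 6))
      refine isBigO_of_bddTop (((hρ.sub (BddTop.const (56 * b7))).add
        ((BddTop.const (6 * α ^ 2)).mul ((BddTop.const b7).add (hρ.mul (BddTop.inv.pow 3))))).add
        (((BddTop.const (6 * α)).mul (hq.pow 2)).add
          ((BddTop.const 2).mul ((BddTop.inv.pow 3).mul (hq.pow 3))))) ?_
      filter_upwards [hρe, hpos] with s hs hs0
      have hu' : u s = α * (s:ℂ)⁻¹ + b4 * (s:ℂ)⁻¹ ^ 4 + b7 * (s:ℂ)⁻¹ ^ 7
        + ρ s * (s:ℂ)⁻¹ ^ 10 := by linear_combination hs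
      have hsT : (s:ℂ) * (s:ℂ)⁻¹ = 1 := mul_inv_cancel₀ (by exact_mod_cast hs0.ne')
      rw [hu']
      generalize (s:ℂ)⁻¹ = T at *
      -- the coefficients of `T³` and `T⁶` vanish by the choice of `b4` and `b7`
      have e1 : b4 + 2 * α ^ 3 - 2 * α = 0 := by rw [hb4]; ring
      have e2 : b7 + 6 * α ^ 2 * b4 - 20 * b4 = 0 := by rw [hb4, hb7]; ring
      linear_combination (α + b4 * T ^ 3 + b7 * T ^ 6 + ρ s * T ^ 9) * hsT + T ^ 3 * e1
        + T ^ 6 * e2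
  obtain ⟨σ, hσ, hσe⟩ := exists_bddTop hr1
  -- termwise integration of the expansion of `u`; `L` is the resulting constant of integration
  obtain ⟨L, hL, hLO⟩ := exists_limit_of_deriv_isBigO
    (f := fun s : ℝ => 2 * (∫ z in (0:ℝ)..s, u z) - 2 * α * Real.log s
      + 2 * b4 / 3 * (s:ℂ)⁻¹ ^ 3 + b7 / 3 * (s:ℂ)⁻¹ ^ 6)
    (f' := fun s : ℝ => 2 * (u s - α * (s:ℂ)⁻¹ - b4 * (s:ℂ)⁻¹ ^ 4 - b7 * (s:ℂ)⁻¹ ^ 7))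
    (by
      filter_upwards [hpos] with s hs
      have e3 := hasDerivAt_inv_pow hs.ne' 3
      have e6 := hasDerivAt_inv_pow hs.ne' 6
      have el := (Real.hasDerivAt_log hs.ne').ofReal_comp
      refine (((((h0.integral_hasStrictDerivAt 0 s).hasDerivAt.const_mul 2).fun_sub
        (el.const_mul (2 * α))).fun_add (e3.const_mul (2 * b4 / 3))).fun_add
        (e6.const_mul (b7 / 3))).congr_deriv ?_
      push_cast
      ring)
    (hr.const_mul_left 2)
  have hLre : L.re = 0 := by
    obtain ⟨a, ha⟩ : ∃ a : ℝ, α = a * I := ⟨α.im, by apply Complex.ext <;> simp [hα]⟩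
    have hI : ∀ s : ℝ, (∫ z in (0:ℝ)..s, u z) = ((∫ z in (0:ℝ)..s, (u z).im : ℝ) : ℂ) * I := by
      intro s
      rw [← intervalIntegral.integral_ofReal, ← intervalIntegral.integral_mul_const]
      congr 1
      ext z
      apply Complex.ext <;> simp [him]
    have h3 : b4 = ((2 * a * (1 + a ^ 2) : ℝ) : ℂ) * I := by
      rw [hb4, ha]; push_cast; rw [mul_pow, I_sq]; ring
    have h7 : b7 = ((4 * a * (1 + a ^ 2) * (10 + 3 * a ^ 2) : ℝ) : ℂ) * I := by
      rw [hb7, ha]; push_cast; rw [mul_pow, I_sq]; ring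
    refine tendsto_nhds_unique ((continuous_re.tendsto L).comp hL) ?_
    refine tendsto_const_nhds.congr fun s => ?_
    have : 2 * (∫ z in (0:ℝ)..s, u z) - 2 * α * Real.log s
      + 2 * b4 / 3 * (s:ℂ)⁻¹ ^ 3 + b7 / 3 * (s:ℂ)⁻¹ ^ 6 =
      ((2 * (∫ z in (0:ℝ)..s, (u z).im) - 2 * a * Real.log s
        + 2 * (2 * a * (1 + a ^ 2)) / 3 * s⁻¹ ^ 3
        + (4 * a * (1 + a ^ 2) * (10 + 3 * a ^ 2)) / 3 * s⁻¹ ^ 6 : ℝ) : ℂ) * I := by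
      rw [hI, h3, h7, ha]; push_cast; ring
    simp only [Function.comp]
    rw [this, re_ofReal_mul]
    simp
  obtain ⟨e, he, hee⟩ := exists_bddTop hLO
  -- the exponent is `L + m s * s⁻³`, and `exp` is expanded to second order in `m s * s⁻³`
  set m : ℝ → ℂ := fun s => -(2 * b4 / 3) + (-(b7 / 3)) * (s:ℂ)⁻¹ ^ 3 + e s * (s:ℂ)⁻¹ ^ 6 with hm
  have hmB : BddTop m :=
    ((BddTop.const _).add ((BddTop.const _).mul (BddTop.inv.pow 3))).add
      (he.mul (BddTop.inv.pow 6))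
  have hzO : (fun s => m s * (s:ℂ)⁻¹ ^ 3) =O[atTop] fun s : ℝ => (s:ℂ)⁻¹ ^ 3 :=
    isBigO_of_bddTop hmB (Eventually.of_forall fun _ => rfl)
  have hT0 : Tendsto (fun s : ℝ => (s:ℂ)⁻¹ ^ 3) atTop (nhds 0) := by
    have := ((continuous_ofReal.tendsto 0).comp (tendsto_inv_atTop_zero (𝕜 := ℝ))).pow 3
    simpa [Function.comp_def] using this
  have hz0 : Tendsto (fun s => m s * (s:ℂ)⁻¹ ^ 3) atTop (nhds 0) := hzO.trans_tendsto hT0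
  have hexp : (fun s => exp (m s * (s:ℂ)⁻¹ ^ 3)
      - (1 + m s * (s:ℂ)⁻¹ ^ 3 + (m s * (s:ℂ)⁻¹ ^ 3) ^ 2 / 2))
      =O[atTop] fun s : ℝ => (s:ℂ)⁻¹ ^ 9 := by
    have := ((exp_sub_sum_range_isBigO_pow 3).comp_tendsto hz0).trans (hzO.pow 3)
    simpa [Function.comp_def, Finset.sum_range_succ, ← pow_mul] using this
  obtain ⟨κ, hκ, hκe⟩ := exists_bddTop hexp
  have hn : BddTop (fun s => -(b7 / 3) + e s * (s:ℂ)⁻¹ ^ 3) :=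
    (BddTop.const _).add (he.mul (BddTop.inv.pow 3))
  obtain ⟨κ', hκ', hE⟩ : ∃ κ', BddTop κ' ∧ ∀ᶠ s : ℝ in atTop, exp (m s * (s:ℂ)⁻¹ ^ 3) =
      1 + (-(2 * b4 / 3)) * (s:ℂ)⁻¹ ^ 3 + (-(b7 / 3) + 2 * b4 ^ 2 / 9) * (s:ℂ)⁻¹ ^ 6
        + κ' s * (s:ℂ)⁻¹ ^ 9 := by
    refine ⟨_, (hκ.add he).add (((BddTop.const (-(2 * b4 / 3))).mul hn).add
      (((BddTop.const (1/2)).mul (BddTop.inv.pow 3)).mul (hn.pow 2))), ?_⟩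
    filter_upwards [hκe] with s hs
    rw [sub_eq_iff_eq_add] at hs
    rw [hs, hm]
    ring
  have hq : BddTop (fun s => b4 + b7 * (s:ℂ)⁻¹ ^ 3 + ρ s * (s:ℂ)⁻¹ ^ 6) :=
    ((BddTop.const _).add ((BddTop.const _).mul (BddTop.inv.pow 3))).add
      (hρ.mul (BddTop.inv.pow 6))
  obtain ⟨δ, hδ, hD⟩ : ∃ δ, BddTop δ ∧ ∀ᶠ s : ℝ in atTop,
      1 - 2 * (deriv u s - u s ^ 2) * (s:ℂ)⁻¹ =
      1 + (2 * α + 2 * α ^ 2) * (s:ℂ)⁻¹ ^ 3 + (8 * b4 + 4 * α * b4) * (s:ℂ)⁻¹ ^ 6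
        + δ s * (s:ℂ)⁻¹ ^ 9 := by
    refine ⟨_, ((BddTop.const (14 * b7)).sub (((BddTop.const 2).mul hσ).mul BddTop.inv)).add
      (((BddTop.const (4 * α)).mul ((BddTop.const b7).add (hρ.mul (BddTop.inv.pow 3)))).add
        ((BddTop.const 2).mul (hq.pow 2))), ?_⟩
    filter_upwards [hρe, hσe] with s hs hs'
    have hu' : u s = α * (s:ℂ)⁻¹ + b4 * (s:ℂ)⁻¹ ^ 4 + b7 * (s:ℂ)⁻¹ ^ 7
        + ρ s * (s:ℂ)⁻¹ ^ 10 := by linear_combination hs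
    have hd' : deriv u s = -α * (s:ℂ)⁻¹ ^ 2 - 4 * b4 * (s:ℂ)⁻¹ ^ 5 - 7 * b7 * (s:ℂ)⁻¹ ^ 8
        + σ s * (s:ℂ)⁻¹ ^ 9 := by linear_combination hs'
    rw [hu', hd']
    ring
  refine ⟨L.im, ?_⟩
  have hLI : L = I * L.im := by apply Complex.ext <;> simp [hLre]
  have hfac : BddTop (fun s : ℝ => 1 + (2 * α + 2 * α ^ 2) * (s:ℂ)⁻¹ ^ 3
      + (8 * b4 + 4 * α * b4) * (s:ℂ)⁻¹ ^ 6 + δ s * (s:ℂ)⁻¹ ^ 9) :=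
    (((BddTop.const _).add ((BddTop.const _).mul (BddTop.inv.pow 3))).add
      ((BddTop.const _).mul (BddTop.inv.pow 6))).add (hδ.mul (BddTop.inv.pow 9))
  refine isBigO_of_bddTop ((BddTop.const (exp L)).mul ((hκ'.mul hfac).add
    ((hδ.add ((BddTop.const (-(2 * b4 / 3))).mul
      ((BddTop.const (8 * b4 + 4 * α * b4)).add (hδ.mul (BddTop.inv.pow 3))))).add
      ((BddTop.const (-(b7 / 3) + 2 * b4 ^ 2 / 9)).mul
        (((BddTop.const (2 * α + 2 * α ^ 2)).add
          ((BddTop.const (8 * b4 + 4 * α * b4)).mul (BddTop.inv.pow 3))).add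
            (hδ.mul (BddTop.inv.pow 6))))))) ?_
  filter_upwards [hE, hD, hee] with s hsE hsD hse
  have hph : 2 * (∫ z in (0:ℝ)..s, u z) - 2 * α * Real.log s = L + m s * (s:ℂ)⁻¹ ^ 3 := by
    rw [hm]; linear_combination hse
  rw [hph, Complex.exp_add, hsE, hsD, ← hLI]
  ring

/-! ### Return to the variable `x` -/

lemma exists_angle (z : ℂ) :
    ∃ θ ∈ Set.Ico (0:ℝ) (2 * Real.pi), z = (‖z‖ : ℂ) * exp (I * θ) := by
  have h := norm_mul_exp_arg_mul_I z
  rcases le_or_gt 0 z.arg with h0 | h0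
  · exact ⟨z.arg, ⟨h0, by linarith [arg_le_pi z, Real.pi_pos]⟩, by rw [mul_comm I, h]⟩
  · refine ⟨z.arg + 2 * Real.pi, ⟨by linarith [neg_pi_lt_arg z, Real.pi_pos], by linarith⟩, ?_⟩
    have : I * ((z.arg + 2 * Real.pi : ℝ) : ℂ) = z.arg * I + 2 * Real.pi * I := by
      push_cast; ring
    rw [this, exp_periodic, h]

lemma norm_one_sub_I_mul (μ : ℝ) : ‖(1 - I * μ : ℂ)‖⁻¹ = (1 + μ ^ 2) ^ (-(1:ℝ)/2) := by
  have h1 : ‖(1 - I * μ : ℂ)‖ = Real.sqrt (1 + μ ^ 2) := by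
    rw [norm_def, normSq_apply]
    simp [sq]
  rw [h1, Real.sqrt_eq_rpow, ← Real.rpow_neg (by positivity)]
  norm_num

lemma cbrt3_pos : 0 < cbrt3 := Real.rpow_pos_of_pos (by norm_num) _

lemma cbrt3_cube : cbrt3 ^ 3 = 3 := by
  rw [cbrt3, ← Real.rpow_natCast, ← Real.rpow_mul (by norm_num)]
  norm_num

/-- The constant in `w` cancels the boundary term at `0`, leaving
`(1 - iμ) w(x) = c G(s) (s - 2(u'(s) - u(s)²))` with `c = 3^{1/3}` and `s = x / c`. -/
lemma w_formula (μ : ℝ) (α : ℂ) (hα : α = -I * μ / 2)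
    (u : ℝ → ℂ) (hu : ContDiff ℝ (⊤ : ℕ∞) u)
    (hP : ∀ x : ℝ, deriv (deriv u) x = (x : ℂ) * u x + 2 * (u x) ^ 3 - α) (x : ℝ) :
    (1 - I * μ) * ((∫ y in (0:ℝ)..x, exp (((2 / cbrt3 : ℝ) : ℂ) *
        ∫ z in (0:ℝ)..y, u (z / cbrt3)))
        - (2 * cbrt3 / (1 - I * μ)) * (deriv u 0 - (u 0) ^ 2)) =
      cbrt3 * exp (2 * ∫ z in (0:ℝ)..(x / cbrt3), u z) *
        ((x / cbrt3 : ℝ) - 2 * (deriv u (x / cbrt3) - u (x / cbrt3) ^ 2)) := by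
  have hc := cbrt3_pos.ne'
  have hc' : (cbrt3 : ℂ) ≠ 0 := by exact_mod_cast hc
  have hμ : (1 - I * μ : ℂ) ≠ 0 := by
    intro h
    have := congrArg re h
    simp at this
  have h1 : ∀ y : ℝ, ((2 / cbrt3 : ℝ) : ℂ) * (∫ z in (0:ℝ)..y, u (z / cbrt3)) =
      2 * ∫ z in (0:ℝ)..(y / cbrt3), u z := by
    intro y
    rw [intervalIntegral.integral_comp_div _ hc, zero_div, real_smul]
    push_cast
    field_simp
  simp_rw [h1]
  rw [intervalIntegral.integral_comp_div (fun t => exp (2 * ∫ z in (0:ℝ)..t, u z)) hc, zero_div,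
    real_smul]
  have h2 := antideriv_identity α u hu hP (x / cbrt3)
  have h3 : 1 + 2 * α = 1 - I * μ := by rw [hα]; ring
  rw [h3] at h2
  have h4 : (1 - I * μ) * ((2 * cbrt3 / (1 - I * μ)) * (deriv u 0 - (u 0) ^ 2)) =
      2 * cbrt3 * (deriv u 0 - (u 0) ^ 2) := by field_simp
  rw [mul_sub, h4]
  linear_combination (cbrt3 : ℂ) * h2

/-- Asymptotics of `g` as `x → +∞`:
`g(x) = Ã₀ + Ã₁ x⁻³ + Ã₂ x⁻⁶ + O(x⁻⁹)` with
`Ã₀ = (1+μ²)^{-1/2} e^{iθ̃₊}`, `Ã₁ = (iμ-1)(iμ+μ²/2) Ã₀`,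
`Ã₂ = (2+iμ)(μ²/4-iμ+6) Ã₁` for some `θ̃₊ ∈ [0,2π)`. -/
theorem stmt_9 (μ : ℝ) (α : ℂ) (hα : α = -Complex.I * μ / 2)
    (u : ℝ → ℂ) (hu : ContDiff ℝ (⊤ : ℕ∞) u)
    (hP : ∀ x : ℝ, deriv (deriv u) x = (x : ℂ) * u x + 2 * (u x) ^ 3 - α)
    (him : ∀ x : ℝ, (u x).re = 0)
    (hAp : ∃ x₀ : ℝ, 0 < x₀ ∧ ∃ K : ℝ, 0 < K ∧ ∀ x : ℝ, x₀ ≤ x →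
      ‖u x - α / x - 2 * α * (1 - α ^ 2) * (x : ℂ) ^ (-4 : ℤ)
        - 4 * α * (1 - α ^ 2) * (10 - 3 * α ^ 2) * (x : ℂ) ^ (-7 : ℤ)‖
        ≤ K * x ^ (-10 : ℤ))
    (Cc : ℂ)
    (hC : Cc = (2 * cbrt3 / (1 - Complex.I * μ)) * (deriv u 0 - (u 0) ^ 2))
    (w : ℝ → ℂ)
    (hw : ∀ x : ℝ, w x =
      (∫ y in (0:ℝ)..x, Complex.exp (((2 / cbrt3 : ℝ) : ℂ) *
        ∫ z in (0:ℝ)..y, u (z / cbrt3))) - Cc)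
    (g : ℝ → ℂ)
    (hg : ∀ x : ℝ, x ≠ 0 →
      g x = Complex.exp (Complex.I * μ * Real.log |x|) * w x / x) :
    ∃ θp : ℝ, θp ∈ Set.Ico (0:ℝ) (2 * Real.pi) ∧
    ∃ A0 A1 A2 : ℂ,
      A0 = (((1 + μ ^ 2) ^ (-(1:ℝ)/2) : ℝ) : ℂ) * Complex.exp (Complex.I * θp) ∧
      A1 = (Complex.I * μ - 1) * (Complex.I * μ + (μ:ℂ) ^ 2 / 2) * A0 ∧
      A2 = (2 + Complex.I * μ) * ((μ:ℂ) ^ 2 / 4 - Complex.I * μ + 6) * A1 ∧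
      ∃ x₁ : ℝ, 0 < x₁ ∧ ∃ K' : ℝ, 0 < K' ∧ ∀ x : ℝ, x₁ ≤ x →
        ‖g x - A0 - A1 * (x : ℂ) ^ (-3 : ℤ) - A2 * (x : ℂ) ^ (-6 : ℤ)‖
          ≤ K' * x ^ (-9 : ℤ) := by
  have hc0 := cbrt3_pos
  have hc' : (cbrt3 : ℂ) ≠ 0 := by exact_mod_cast hc0.ne'
  have hc3 : (cbrt3 : ℂ) ^ 3 = 3 := by exact_mod_cast cbrt3_cube
  have hμ : (1 - I * μ : ℂ) ≠ 0 := by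
    intro h
    have := congrArg re h
    simp at this
  obtain ⟨x₀, hx₀, K, hK, hbound⟩ := hAp
  obtain ⟨θ, hθ⟩ := asymp_s α (by simp [hα]) u hu hP him (2 * α * (1 - α ^ 2))
    (4 * α * (1 - α ^ 2) * (10 - 3 * α ^ 2)) rfl rfl (by
      refine IsBigO.of_bound K ?_
      filter_upwards [eventually_ge_atTop x₀] with s hs
      have hs0 : 0 < s := by linarith
      have h := hbound s hs
      have e : ∀ n : ℕ, (s:ℂ) ^ (-(n:ℤ)) = (s:ℂ)⁻¹ ^ n := fun n => by simp
      have e4 := e 4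
      have e7 := e 7
      push_cast at e4 e7
      rw [e4, e7, div_eq_mul_inv] at h
      refine h.trans (le_of_eq ?_)
      rw [norm_pow, norm_inv, norm_real, Real.norm_eq_abs, abs_of_pos hs0]
      rw [show (-10:ℤ) = -((10:ℕ):ℤ) by norm_num, zpow_neg, zpow_natCast, inv_pow])
  -- `B * exp (I * θ)` is the leading coefficient; its modulus is `(1 + μ²)^(-1/2)`
  set B : ℂ := exp (I * (μ * Real.log cbrt3)) / (1 - I * μ) with hB
  obtain ⟨θp, hθp, hA⟩ := exists_angle (B * exp (I * θ))
  have hnorm : ‖B * exp (I * θ)‖ = (1 + μ ^ 2) ^ (-(1:ℝ)/2) := by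
    rw [hB, ← norm_one_sub_I_mul, norm_mul, norm_div, ← ofReal_mul, norm_exp_I_mul_ofReal,
      norm_exp_I_mul_ofReal]
    simp
  rw [hnorm] at hA
  refine ⟨θp, hθp, B * exp (I * θ), _, _, hA, rfl, rfl, ?_⟩
  have hlim : Tendsto (fun x : ℝ => x / cbrt3) atTop atTop :=
    tendsto_id.atTop_div_const hc0
  obtain ⟨M, hM, hMb⟩ := ((hθ.comp_tendsto hlim).const_mul_left B).exists_pos
  obtain ⟨X, hX⟩ := eventually_atTop.1 hMb.bound
  refine ⟨max X 1, by positivity, M * 27, by positivity, fun x hx => ?_⟩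
  have hx1 : 1 ≤ x := (le_max_right _ _).trans hx
  have hx0 : 0 < x := by linarith
  have hxc : (x : ℂ) ≠ 0 := by exact_mod_cast hx0.ne'
  have h := hX x ((le_max_left _ _).trans hx)
  simp only [Function.comp] at h
  have hinv : (((x / cbrt3 : ℝ) : ℂ))⁻¹ = cbrt3 * (x:ℂ)⁻¹ := by
    push_cast; field_simp
  have hgx : g x = B * (exp (2 * (∫ z in (0:ℝ)..(x / cbrt3), u z)
      - 2 * α * Real.log (x / cbrt3))
        * (1 - 2 * (deriv u (x / cbrt3) - u (x / cbrt3) ^ 2) * (cbrt3 * (x:ℂ)⁻¹))) := by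
    have hwx := w_formula μ α hα u hu hP x
    rw [← hC, ← hw x] at hwx
    have hwx' : w x = cbrt3 * exp (2 * ∫ z in (0:ℝ)..(x / cbrt3), u z) *
        ((x / cbrt3 : ℝ) - 2 * (deriv u (x / cbrt3) - u (x / cbrt3) ^ 2)) / (1 - I * μ) := by
      rw [← hwx]; field_simp
    have hexp : exp (2 * (∫ z in (0:ℝ)..(x / cbrt3), u z) - 2 * α * Real.log (x / cbrt3)) =
        exp (I * μ * Real.log x) * exp (2 * ∫ z in (0:ℝ)..(x / cbrt3), u z)
          / exp (I * (μ * Real.log cbrt3)) := by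
      rw [← Complex.exp_add, ← Complex.exp_sub, Real.log_div hx0.ne' hc0.ne', hα]
      congr 1
      push_cast
      ring
    rw [hg x hx0.ne', hwx', hexp, hB, abs_of_pos hx0]
    have := Complex.exp_ne_zero (I * (μ * Real.log cbrt3))
    push_cast
    field_simp
  have e : ∀ n : ℕ, (x:ℂ) ^ (-(n:ℤ)) = (x:ℂ)⁻¹ ^ n := fun n => by simp
  have e3 := e 3
  have e6 := e 6
  push_cast at e3 e6
  rw [hinv] at h
  have hrhs : ‖((cbrt3 : ℂ) * (x:ℂ)⁻¹) ^ 9‖ = 27 * x ^ (-9 : ℤ) := by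
    rw [mul_pow, show (cbrt3 : ℂ) ^ 9 = (cbrt3 ^ 3) ^ 3 by ring, hc3, norm_mul, norm_pow, norm_pow,
      norm_inv, norm_real, Real.norm_eq_abs, abs_of_pos hx0,
      show (-9:ℤ) = -((9:ℕ):ℤ) by norm_num, zpow_neg, zpow_natCast, inv_pow]
    norm_num
  rw [hrhs, ← mul_assoc M] at h
  refine le_trans (le_of_eq ?_) h
  congr 1
  rw [e3, e6, mul_sub, ← hgx]
  have h3 : ((cbrt3 : ℂ) * (x:ℂ)⁻¹) ^ 3 = 3 * (x:ℂ)⁻¹ ^ 3 := by rw [mul_pow, hc3]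
  have h6 : ((cbrt3 : ℂ) * (x:ℂ)⁻¹) ^ 6 = 9 * (x:ℂ)⁻¹ ^ 6 := by
    rw [mul_pow, show (cbrt3 : ℂ) ^ 6 = (cbrt3 ^ 3) ^ 2 by ring, hc3]; norm_num
  have hIμ : I * μ = -2 * α := by rw [hα]; ring
  have hμ2 : (μ : ℂ) ^ 2 = -4 * α ^ 2 := by
    rw [hα]; linear_combination (μ:ℂ) ^ 2 * I_sq
  rw [h3, h6, hIμ, hμ2]
  ring
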